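/- Let G be a finite undirected graph with positive edge weights such that shortest paths between all pairs of vertices are unique in G and also in G∖{e₁}. Let Q be the unique shortest s–t path in G∖{e₁}, and suppose Q contains the edge e₂ = {c,d} with c preceding d along Q. If the unique shortest s–d path in G does not use the edge e₁, then c lies on the unique shortest s–d path in G. -/

import Mathlib

/-!
Write `Q = q · (c, d) · r`. The prefix `q · (c, d)` of the shortest path `Q` is itself a shortest
path of `G ∖ {e₁}`, because a lighter prefix could be spliced into `Q`
(`isShortest_of_append_left`). A shortest `s`–`d` path `R` of `G` avoids `e₁`, so it is also a walk
of the subgraph `G ∖ {e₁}`, and remains shortest there (`isShortest_transfer`). Uniqueness of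
shortest paths in `G ∖ {e₁}` identifies `R` with this prefix, which visits `c`.
-/

open SimpleGraph

namespace FaultyOracle

variable {V : Type*}

/-- The weight of a walk: the sum of the weights of its edges. -/
def wht (w : Sym2 V → ℝ) {G : SimpleGraph V} {u v : V} (p : G.Walk u v) : ℝ :=
  (p.edges.map w).sum

/-- A walk is a shortest path (w.r.t. the edge weights `w`): it is a path and its weight
is at most the weight of every walk with the same endpoints. -/
def IsShortest (w : Sym2 V → ℝ) {G : SimpleGraph V} {u v : V} (p : G.Walk u v) : Prop :=
  p.IsPath ∧ ∀ q : G.Walk u v, wht w p ≤ wht w q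

/-- Shortest paths in `G` (w.r.t. `w`) are unique. -/
def UniqueShortest (G : SimpleGraph V) (w : Sym2 V → ℝ) : Prop :=
  ∀ ⦃u v : V⦄ (p q : G.Walk u v), IsShortest w p → IsShortest w q → p = q

/-- `u` lies in the subtree `T_s(x)` of `x` in the shortest-path tree rooted at `s`:
some (= the unique) shortest `s`–`u` path passes through `x`. -/
def InSubtree (G : SimpleGraph V) (w : Sym2 V → ℝ) (s x u : V) : Prop :=
  ∃ p : G.Walk s u, IsShortest w p ∧ x ∈ p.support

/-- A walk is intact from a set `fends` of (fault-edge) endpoints: no vertex in `fends`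
lies strictly between its endpoints. -/
def Intact {G : SimpleGraph V} {u v : V} (p : G.Walk u v) (fends : Set V) : Prop :=
  ∀ y ∈ fends, y ∈ p.support → y = u ∨ y = v

/-- `x` is `s`-clean from the set of fault endpoints `fends`: the (unique) shortest
`s`–`x` path is intact from `fends`, and no vertex of `fends` lies in `T_s(x)`. -/
def SClean (G : SimpleGraph V) (w : Sym2 V → ℝ) (s x : V) (fends : Set V) : Prop :=
  (∀ p : G.Walk s x, IsShortest w p → Intact p fends) ∧
    ∀ y ∈ fends, ¬ InSubtree G w s x y

/-- The walk `p` traverses the edge `{a, b}` from `a` to `b` (so `a` is nearer to the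
start of `p`). -/
def Traverses {G : SimpleGraph V} {u v : V} (p : G.Walk u v) (a b : V) : Prop :=
  ∃ (q : G.Walk u a) (hab : G.Adj a b) (r : G.Walk b v), p = q.append (Walk.cons hab r)

/-- The detour of `P` (w.r.t. the primary path `Pst` and the secondary path `Psec`)
starts on the primary path: `P` has a prefix `Q`, all of whose edges lie on
`Pst ∪ Psec`, ending at a vertex `x` of the primary path, after which `P` immediately
deviates from `Pst ∪ Psec`. -/
def DetourStartsOnPrimary {G₁ G₂ H : SimpleGraph V} {s t : V} (P : H.Walk s t)
    (Pst : G₁.Walk s t) (Psec : G₂.Walk s t) : Prop :=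
  ∃ (x : V) (Q : H.Walk s x) (R : H.Walk x t),
    P = Q.append R ∧
    (∀ e ∈ Q.edges, e ∈ Pst.edges ∨ e ∈ Psec.edges) ∧
    x ∈ Pst.support ∧ ¬ R.Nil ∧
    (∀ e, R.edges.head? = some e → ¬(e ∈ Pst.edges ∨ e ∈ Psec.edges))

end FaultyOracle

open FaultyOracle

namespace FaultyOracle

lemma wht_append {V : Type*} (w : Sym2 V → ℝ) {G : SimpleGraph V} {u v x : V}
    (p : G.Walk u v) (q : G.Walk v x) : wht w (p.append q) = wht w p + wht w q := by
  simp [wht, Walk.edges_append]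

/-- A prefix of a shortest path is a shortest path. -/
lemma isShortest_of_append_left {V : Type*} {w : Sym2 V → ℝ} {G : SimpleGraph V} {u v x : V}
    {p : G.Walk u v} {q : G.Walk v x} (h : IsShortest w (p.append q)) : IsShortest w p := by
  refine ⟨h.1.of_append_left, fun p' => ?_⟩
  have := h.2 (p'.append q)
  rw [wht_append, wht_append] at this
  linarith

/-- A shortest path of `G` all of whose edges lie in a subgraph `H` is shortest in `H`. -/
lemma isShortest_transfer {V : Type*} {w : Sym2 V → ℝ} {G H : SimpleGraph V} (hle : H ≤ G)
    {u v : V} {p : G.Walk u v} (h : IsShortest w p) (hp : ∀ e ∈ p.edges, e ∈ H.edgeSet) :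
    IsShortest w (p.transfer H hp) := by
  refine ⟨h.1.transfer hp, fun q => ?_⟩
  have := h.2 (q.mapLe hle)
  simpa [wht] using this

end FaultyOracle

/-- Let `Q` be the unique shortest `s`–`t` path in `G ∖ {e₁}` and suppose it traverses the
edge `e₂ = {c, d}` from `c` to `d`.  If the unique shortest `s`–`d` path of `G` does not use
the edge `e₁`, then `c` lies on the unique shortest `s`–`d` path of `G`. -/
theorem pred_on_secondary_lies_on_shortest
    {V : Type*} [Fintype V] [DecidableEq V] (G : SimpleGraph V) (w : Sym2 V → ℝ)
    (hw : ∀ e ∈ G.edgeSet, 0 < w e)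
    (s t c d : V) (e₁ e₂ : Sym2 V) (he₂ : e₂ = s(c, d))
    (husp : UniqueShortest G w)
    (husp' : UniqueShortest (G.deleteEdges {e₁}) w)
    (Q : (G.deleteEdges {e₁}).Walk s t) (hQ : IsShortest w Q)
    (hcd : Traverses Q c d)
    (havoid : ∀ R : G.Walk s d, IsShortest w R → e₁ ∉ R.edges) :
    ∀ R : G.Walk s d, IsShortest w R → c ∈ R.support := by
  intro R hR
  obtain ⟨q, hab, r, rfl⟩ := hcd
  have hp : IsShortest w (q.append (Walk.cons hab Walk.nil)) := by
    apply isShortest_of_append_left (q := r)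
    rwa [← Walk.append_assoc, Walk.cons_append, Walk.nil_append]
  have hRe : ∀ e ∈ R.edges, e ∈ (G.deleteEdges {e₁}).edgeSet := by
    intro e he
    rw [edgeSet_deleteEdges]
    refine ⟨R.edges_subset_edgeSet he, ?_⟩
    rintro rfl
    exact havoid R hR he
  have heq := husp' _ _ (isShortest_transfer (deleteEdges_le _) hR hRe) hp
  rw [← Walk.support_transfer R hRe, heq]
  simp [Walk.mem_support_append_iff]
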